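/- arXiv:2111.09366 — 13 statements merged into one kernel-verified Lean document; each statement's English description precedes it below -/
import Mathlib

section
/- Let s ≥ 1, let Δt > 0, Δx ≠ 0, let γ_i, a_{ij}, b_i, c_i (1 ≤ i,j ≤ s) be real coefficients with γ_i ≠ 0 for all i, satisfying the symplecticity condition b_i a_{ij}/γ_i + b_j a_{ji}/γ_j − b_i b_j = 0 for all 1 ≤ i,j ≤ s. Let f : ℝ × ℝ^M → ℝ^M, t0 ∈ ℝ, and u0, u1, Y_1, …, Y_s ∈ ℝ^M satisfy the EFRK step relations u1 = u0 + Δt ∑_i b_i f(t0 + c_i Δt, Y_i) and Y_i = γ_i u0 + Δt ∑_j a_{ij} f(t0 + c_j Δt, Y_j). Let Ω ∈ ℝ^{M×M} be symmetric and suppose F, F′ : ℝ × ℝ^M → ℝ satisfy (F′(t,U) − F(t,U))/Δx = −Uᵀ Ω f(t,U) for all t ∈ ℝ and U ∈ ℝ^M. Then (½ u1ᵀ Ω u1 − ½ u0ᵀ Ω u0)/Δt + (1/Δx) ∑_{i=1}^s (b_i/γ_i)(F′(t0 + c_i Δt, Y_i) − F(t0 + c_i Δt, Y_i)) = 0. 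-/
/-!
Write `k i = f (t0 + c i * Δt) (Y i)` and `B x y = xᵀ Ω y`, a symmetric bilinear form. Expanding the
update, the density increment divided by `Δt` is
`∑ b i B(u0, k i) + (Δt / 2) ∑∑ b i b j B(k i, k j)`.
By the conservation law the flux term is `-∑ (b i / γ i) B(Y i, k i)`, and inserting the stage
equation turns it into `-∑ b i B(u0, k i) - Δt ∑∑ (b i a i j / γ i) B(k j, k i)`. Symmetrizing the
last double sum in `i, j`, the symplecticity condition makes it cancel the quadratic part of the
increment (`symplectic_double_sum`).
-/

open Matrix Finset

/-- Against a symmetric kernel `K`, the symplecticity condition says that the double sum weighted by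
`b i * a i j / γ i` is half of the one weighted by `b i * b j`. -/
theorem symplectic_double_sum {s : ℕ} (γ b : Fin s → ℝ) (a K : Fin s → Fin s → ℝ)
    (hsympl : ∀ i j, b i * a i j / γ i + b j * a j i / γ j - b i * b j = 0)
    (hK : ∀ i j, K i j = K j i) :
    ∑ i, ∑ j, b i * b j * K i j = 2 * ∑ i, ∑ j, b i * a i j / γ i * K i j := by
  have hswap : ∑ i, ∑ j, b i * a i j / γ i * K i j
      = ∑ i, ∑ j, b j * a j i / γ j * K i j := by
    rw [Finset.sum_comm]
    exact Finset.sum_congr rfl fun i _ => Finset.sum_congr rfl fun j _ => by rw [hK j i]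
  rw [two_mul]
  nth_rewrite 2 [hswap]
  simp only [← Finset.sum_add_distrib]
  refine Finset.sum_congr rfl fun i _ => Finset.sum_congr rfl fun j _ => ?_
  linear_combination (-K i j) * hsympl i j

/-- Theorem 2, part 2 ('if' direction): a symplectic EFRK step preserves semidiscrete
conservation laws with quadratic homogeneous density `G(U) = ½ Uᵀ Ω U`. -/
theorem symplectic_efrk_preserves_quadratic_density {M : ℕ} (s : ℕ) (hs : 1 ≤ s)
    (Δt Δx : ℝ) (hΔt : 0 < Δt) (hΔx : Δx ≠ 0)
    (γ b c : Fin s → ℝ) (a : Fin s → Fin s → ℝ)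
    (hγ : ∀ i, γ i ≠ 0)
    (hsympl : ∀ i j, b i * a i j / γ i + b j * a j i / γ j - b i * b j = 0)
    (f : ℝ → (Fin M → ℝ) → (Fin M → ℝ)) (t0 : ℝ)
    (u0 u1 : Fin M → ℝ) (Y : Fin s → Fin M → ℝ)
    (hsol : u1 = u0 + Δt • ∑ i, b i • f (t0 + c i * Δt) (Y i))
    (hstage : ∀ i, Y i = γ i • u0 + Δt • ∑ j, a i j • f (t0 + c j * Δt) (Y j))
    (Ω : Matrix (Fin M) (Fin M) ℝ) (hΩ : Ω.IsSymm)
    (F F' : ℝ → (Fin M → ℝ) → ℝ)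
    (hcl : ∀ (t : ℝ) (U : Fin M → ℝ),
      (F' t U - F t U) / Δx = -(U ⬝ᵥ (Ω *ᵥ f t U))) :
    ((1 / 2) * (u1 ⬝ᵥ (Ω *ᵥ u1)) - (1 / 2) * (u0 ⬝ᵥ (Ω *ᵥ u0))) / Δt
      + (1 / Δx) * ∑ i, (b i / γ i) *
          (F' (t0 + c i * Δt) (Y i) - F (t0 + c i * Δt) (Y i)) = 0 := by
  set k : Fin s → Fin M → ℝ := fun i => f (t0 + c i * Δt) (Y i) with hk
  have hsymm : ∀ x y : Fin M → ℝ, x ⬝ᵥ (Ω *ᵥ y) = y ⬝ᵥ (Ω *ᵥ x) := by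
    intro x y
    rw [dotProduct_mulVec, ← mulVec_transpose, hΩ.eq, dotProduct_comm]
  have hflux : (1 / Δx) * ∑ i, (b i / γ i) *
      (F' (t0 + c i * Δt) (Y i) - F (t0 + c i * Δt) (Y i))
      = -∑ i, (b i / γ i) * (Y i ⬝ᵥ (Ω *ᵥ k i)) := by
    rw [Finset.mul_sum, ← Finset.sum_neg_distrib]
    refine Finset.sum_congr rfl fun i _ => ?_
    linear_combination (b i / γ i) * hcl (t0 + c i * Δt) (Y i)
  have hY : ∀ i, (b i / γ i) * (Y i ⬝ᵥ (Ω *ᵥ k i))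
      = b i * (u0 ⬝ᵥ (Ω *ᵥ k i))
        + Δt * ∑ j, b i * a i j / γ i * (k i ⬝ᵥ (Ω *ᵥ k j)) := by
    intro i
    have h : Y i ⬝ᵥ (Ω *ᵥ k i)
        = γ i * (u0 ⬝ᵥ (Ω *ᵥ k i)) + Δt * ∑ j, a i j * (k i ⬝ᵥ (Ω *ᵥ k j)) := by
      have e : Y i = γ i • u0 + Δt • ∑ j, a i j • k j := hstage i
      -- Only the explicit `Y i` is rewritten, not the one inside `k i`.
      calc Y i ⬝ᵥ (Ω *ᵥ k i)
          = (γ i • u0 + Δt • ∑ j, a i j • k j) ⬝ᵥ (Ω *ᵥ k i) :=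
            congrArg (· ⬝ᵥ (Ω *ᵥ k i)) e
        _ = γ i * (u0 ⬝ᵥ (Ω *ᵥ k i)) + Δt * ∑ j, a i j * (k i ⬝ᵥ (Ω *ᵥ k j)) := by
            simp only [add_dotProduct, smul_dotProduct, sum_dotProduct, smul_eq_mul,
              hsymm (k i)]
    have hsum : ∑ j, b i * a i j / γ i * (k i ⬝ᵥ (Ω *ᵥ k j))
        = b i / γ i * ∑ j, a i j * (k i ⬝ᵥ (Ω *ᵥ k j)) := by
      rw [Finset.mul_sum]
      exact Finset.sum_congr rfl fun j _ => by ring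
    have hcancel : b i / γ i * γ i = b i := div_mul_cancel₀ _ (hγ i)
    rw [h, hsum]
    linear_combination (u0 ⬝ᵥ (Ω *ᵥ k i)) * hcancel
  have hu1 : u1 ⬝ᵥ (Ω *ᵥ u1) = u0 ⬝ᵥ (Ω *ᵥ u0)
      + 2 * Δt * ∑ i, b i * (u0 ⬝ᵥ (Ω *ᵥ k i))
      + Δt ^ 2 * ∑ i, ∑ j, b i * b j * (k i ⬝ᵥ (Ω *ᵥ k j)) := by
    have e : u1 = u0 + Δt • ∑ i, b i • k i := hsol
    have hlin : ∀ x : Fin M → ℝ, x ⬝ᵥ (Ω *ᵥ ∑ i, b i • k i)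
        = ∑ i, b i * (x ⬝ᵥ (Ω *ᵥ k i)) := by
      intro x
      rw [hsymm]
      simp only [sum_dotProduct, smul_dotProduct, smul_eq_mul, hsymm x]
    have hquad : (∑ i, b i • k i) ⬝ᵥ (Ω *ᵥ ∑ i, b i • k i)
        = ∑ i, ∑ j, b i * b j * (k i ⬝ᵥ (Ω *ᵥ k j)) := by
      rw [sum_dotProduct]
      refine Finset.sum_congr rfl fun i _ => ?_
      rw [smul_dotProduct, hlin, smul_eq_mul, Finset.mul_sum]
      exact Finset.sum_congr rfl fun j _ => by ring
    rw [e]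
    simp only [mulVec_add, mulVec_smul, add_dotProduct, dotProduct_add, smul_dotProduct,
      dotProduct_smul, smul_eq_mul]
    rw [hsymm (∑ i, b i • k i) u0, hquad, hlin]
    ring
  have hdouble := symplectic_double_sum γ b a (fun i j => k i ⬝ᵥ (Ω *ᵥ k j)) hsympl
    fun i j => hsymm (k i) (k j)
  rw [hflux, Finset.sum_congr rfl fun i _ => hY i, Finset.sum_add_distrib, ← Finset.mul_sum,
    hu1, hdouble]
  have hne : Δt ≠ 0 := hΔt.ne'
  field_simp
  ring
end

section
/- Let s ≥ 1, Δt ∈ ℝ, let γ_i, a_{ij}, b_i, c_i (1 ≤ i,j ≤ s) be real coefficients with γ_i ≠ 0 for all i, let f : ℝ × ℝ^M → ℝ^M, t0 ∈ ℝ, and let u0, u1, Y_1, …, Y_s ∈ ℝ^M satisfy u1 = u0 + Δt ∑_i b_i f^i and Y_i = γ_i u0 + Δt ∑_j a_{ij} f^j, where f^i := f(t0 + c_i Δt, Y_i). Then for every symmetric matrix Ω ∈ ℝ^{M×M}: ½ u1ᵀ Ω u1 = ½ u0ᵀ Ω u0 + Δt ∑_{i=1}^s (b_i/γ_i) Y_iᵀ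 Ω f^i + (Δt²/2) ∑_{i,j=1}^s (b_i b_j − b_i a_{ij}/γ_i − b_j a_{ji}/γ_j) (f^i)ᵀ Ω f^j. -/
open Matrix Finset

/-!
Write `F i` for the stage slopes. Expanding the update formula by bilinearity and symmetry of `Ω`
produces the cross terms `Δt * b i * (u0 ⬝ᵥ Ω *ᵥ F i)`. Since `γ i ≠ 0`, the stage equation can be
solved for `u0`, which trades each cross term for `(b i / γ i) * (Y i ⬝ᵥ Ω *ᵥ F i)` minus a double
sum with weights `b i * a i j / γ i`. By symmetry of `Ω` that double sum is half of its
symmetrization in `i` and `j`, which is the correction in the claimed formula.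
-/

theorem dotProduct_mulVec_comm_of_isSymm {n : Type*} [Fintype n] {Ω : Matrix n n ℝ}
    (hΩ : Ω.IsSymm) (x y : n → ℝ) : x ⬝ᵥ (Ω *ᵥ y) = y ⬝ᵥ (Ω *ᵥ x) := by
  rw [dotProduct_mulVec, ← mulVec_transpose, hΩ.eq, dotProduct_comm]


/-- Key algebraic identity in the proof of Theorem 2, part 2: expansion of the
quadratic form `½ Uᵀ Ω U` along one EFRK step. -/
theorem efrk_quadratic_expansion {M : ℕ} (s : ℕ) (hs : 1 ≤ s)
    (Δt : ℝ)
    (γ b c : Fin s → ℝ) (a : Fin s → Fin s → ℝ)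
    (hγ : ∀ i, γ i ≠ 0)
    (f : ℝ → (Fin M → ℝ) → (Fin M → ℝ)) (t0 : ℝ)
    (u0 u1 : Fin M → ℝ) (Y : Fin s → Fin M → ℝ)
    (hsol : u1 = u0 + Δt • ∑ i, b i • f (t0 + c i * Δt) (Y i))
    (hstage : ∀ i, Y i = γ i • u0 + Δt • ∑ j, a i j • f (t0 + c j * Δt) (Y j))
    (Ω : Matrix (Fin M) (Fin M) ℝ) (hΩ : Ω.IsSymm) :
    (1 / 2) * (u1 ⬝ᵥ (Ω *ᵥ u1)) =
      (1 / 2) * (u0 ⬝ᵥ (Ω *ᵥ u0))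
      + Δt * ∑ i, (b i / γ i) * (Y i ⬝ᵥ (Ω *ᵥ f (t0 + c i * Δt) (Y i)))
      + (Δt ^ 2 / 2) * ∑ i, ∑ j,
          (b i * b j - b i * a i j / γ i - b j * a j i / γ j) *
            (f (t0 + c i * Δt) (Y i) ⬝ᵥ (Ω *ᵥ f (t0 + c j * Δt) (Y j))) := by
  -- The slopes are generalized so that rewriting `Y i` does not loop through `f`.
  generalize hF : (fun i => f (t0 + c i * Δt) (Y i)) = F at *
  have hFi : ∀ i, f (t0 + c i * Δt) (Y i) = F i := fun i => congrFun hF i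
  simp only [hFi] at hsol hstage ⊢
  have hsymm := dotProduct_mulVec_comm_of_isSymm hΩ
  have hupd : u1 ⬝ᵥ (Ω *ᵥ u1) = u0 ⬝ᵥ (Ω *ᵥ u0) + 2 * Δt * ∑ i, b i * (u0 ⬝ᵥ (Ω *ᵥ F i))
      + Δt ^ 2 * ∑ i, ∑ j, b i * b j * (F i ⬝ᵥ (Ω *ᵥ F j)) := by
    have hcross : u0 ⬝ᵥ (Ω *ᵥ ∑ i, b i • F i) = ∑ i, b i * (u0 ⬝ᵥ (Ω *ᵥ F i)) := by
      simp only [mulVec_sum, mulVec_smul, dotProduct_sum, dotProduct_smul, smul_eq_mul]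
    have hquad : (∑ i, b i • F i) ⬝ᵥ (Ω *ᵥ ∑ i, b i • F i)
        = ∑ i, ∑ j, b i * b j * (F i ⬝ᵥ (Ω *ᵥ F j)) := by
      simp only [mulVec_sum, mulVec_smul, sum_dotProduct, dotProduct_sum, dotProduct_smul,
        smul_dotProduct, smul_eq_mul, mul_sum]
      rw [sum_comm]
      exact sum_congr rfl fun i _ => sum_congr rfl fun j _ => by ring
    rw [hsol, ← hcross, ← hquad]
    simp only [mulVec_add, mulVec_smul, dotProduct_add, add_dotProduct, dotProduct_smul,
      smul_dotProduct, smul_eq_mul]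
    rw [hsymm (∑ i, b i • F i) u0]
    ring
  have hstages : ∑ i, (b i / γ i) * (Y i ⬝ᵥ (Ω *ᵥ F i)) = ∑ i, b i * (u0 ⬝ᵥ (Ω *ᵥ F i))
      + Δt * ∑ i, ∑ j, b i * a i j / γ i * (F i ⬝ᵥ (Ω *ᵥ F j)) := by
    rw [mul_sum, ← sum_add_distrib]
    refine sum_congr rfl fun i _ => ?_
    have hi := hγ i
    rw [hstage i]
    simp only [add_dotProduct, smul_dotProduct, sum_dotProduct, smul_eq_mul, mul_add, mul_sum]
    congr 1
    · field_simp
    · refine sum_congr rfl fun j _ => ?_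
      rw [hsymm (F j) (F i)]
      ring
  have hswap : ∑ i, ∑ j, b j * a j i / γ j * (F i ⬝ᵥ (Ω *ᵥ F j))
      = ∑ i, ∑ j, b i * a i j / γ i * (F i ⬝ᵥ (Ω *ᵥ F j)) := by
    rw [sum_comm]
    exact sum_congr rfl fun i _ => sum_congr rfl fun j _ => by rw [hsymm (F j) (F i)]
  simp only [sub_mul, sum_sub_distrib]
  rw [hupd, hstages, hswap]
  ring
end

section
/- Let s ≥ 1, Δt ∈ ℝ, γ ≠ 0, let a_{ij}, b_i, c_i (1 ≤ i,j ≤ s) be real coefficients, let f : ℝ × ℝ^M → ℝ^M, t0 ∈ ℝ, and let u0, u1, Y_1, …, Y_s ∈ ℝ^M satisfy u1 = u0 + Δt ∑_i b_i f^i and Y_i = γ u0 + Δt ∑_j a_{ij} f^j, where f^i := f(t0 + c_i Δt, Y_i). Then for every symmetric Ω ∈ ℝ^{M×M} and every w ∈ ℝ^M, setting G(U) := ½ Uᵀ Ω U + ⟨w, U⟩, one has: G(γ u1) = G(γ u0) + γ Δt ∑_{i=1}^s b_i (Y_iᵀ Ω + wᵀ) f^i + (γ² Δt²/2) ∑_{i,j=1}^s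 (b_i b_j − b_i a_{ij}/γ − b_j a_{ji}/γ) (f^i)ᵀ Ω f^j. -/
/-!
Write `g i` for the stage slopes `f^i` and `F = ∑ i, b i • g i`, so that `u1 = u0 + Δt F`. Since
`Ω` is symmetric, `G(γ u1) - G(γ u0)` is
`γ Δt (γ u0ᵀ Ω F + wᵀ F) + (γ² Δt² / 2) Fᵀ Ω F`. The stage equations replace `γ u0` in the
linear term by `Y i - Δt ∑ j, a i j • g j` (`hlin`); the resulting correction
`- γ Δt² ∑ i, ∑ j, b i * a i j * (g i)ᵀ Ω (g j)`, symmetrized in `i` and `j`, is the stage part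
of the double sum (`hdouble`), and `Fᵀ Ω F` supplies its `b i * b j` part.
-/

open Matrix Finset

/-- Quadratic (possibly non-homogeneous) density `G(U) = ½ Uᵀ Ω U + ⟨w, U⟩`. -/
noncomputable def quadDensity {M : ℕ} (Ω : Matrix (Fin M) (Fin M) ℝ) (w : Fin M → ℝ)
    (U : Fin M → ℝ) : ℝ :=
  (1 / 2) * (U ⬝ᵥ (Ω *ᵥ U)) + w ⬝ᵥ U

/-- Key algebraic identity in the proof of Theorem 3: expansion of the quadratic
function `G(U) = ½ Uᵀ Ω U + ⟨w, U⟩` along one EFRK step with all `γ_i = γ`. -/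
theorem efrk_equal_gamma_quadratic_expansion {M : ℕ} (s : ℕ) (hs : 1 ≤ s)
    (Δt γ : ℝ) (hγ : γ ≠ 0)
    (b c : Fin s → ℝ) (a : Fin s → Fin s → ℝ)
    (f : ℝ → (Fin M → ℝ) → (Fin M → ℝ)) (t0 : ℝ)
    (u0 u1 : Fin M → ℝ) (Y : Fin s → Fin M → ℝ)
    (hsol : u1 = u0 + Δt • ∑ i, b i • f (t0 + c i * Δt) (Y i))
    (hstage : ∀ i, Y i = γ • u0 + Δt • ∑ j, a i j • f (t0 + c j * Δt) (Y j))
    (Ω : Matrix (Fin M) (Fin M) ℝ) (hΩ : Ω.IsSymm) (w : Fin M → ℝ) :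
    quadDensity Ω w (γ • u1) =
      quadDensity Ω w (γ • u0)
      + γ * Δt * ∑ i, b i *
          (Y i ⬝ᵥ (Ω *ᵥ f (t0 + c i * Δt) (Y i)) + w ⬝ᵥ f (t0 + c i * Δt) (Y i))
      + (γ ^ 2 * Δt ^ 2 / 2) * ∑ i, ∑ j,
          (b i * b j - b i * a i j / γ - b j * a j i / γ) *
            (f (t0 + c i * Δt) (Y i) ⬝ᵥ (Ω *ᵥ f (t0 + c j * Δt) (Y j))) := by
  -- From here on only the values `g i = f^i` matter, not the dependence of `f` on the stages.
  generalize hg : (fun i => f (t0 + c i * Δt) (Y i)) = g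
  have hg' : ∀ i, f (t0 + c i * Δt) (Y i) = g i := fun i => congrFun hg i
  simp only [hg'] at hsol hstage ⊢
  have hsymm : ∀ x y : Fin M → ℝ, x ⬝ᵥ (Ω *ᵥ y) = y ⬝ᵥ (Ω *ᵥ x) := fun x y => by
    rw [dotProduct_mulVec, ← mulVec_transpose, hΩ.eq, dotProduct_comm]
  have hstageΩ : ∀ i, Y i ⬝ᵥ (Ω *ᵥ g i) =
      γ * (u0 ⬝ᵥ (Ω *ᵥ g i)) + Δt * ∑ j, a i j * (g i ⬝ᵥ (Ω *ᵥ g j)) := fun i => by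
    conv_lhs => rw [hstage i]
    simp only [add_dotProduct, smul_dotProduct, sum_dotProduct, smul_eq_mul]
    simp only [hsymm _ (g i)]
  have hlin : ∑ i, b i * (Y i ⬝ᵥ (Ω *ᵥ g i) + w ⬝ᵥ g i) =
      γ * (u0 ⬝ᵥ (Ω *ᵥ ∑ i, b i • g i)) + w ⬝ᵥ (∑ i, b i • g i)
        + Δt * ∑ i, ∑ j, b i * a i j * (g i ⬝ᵥ (Ω *ᵥ g j)) := by
    simp only [hstageΩ, mulVec_sum, mulVec_smul, dotProduct_sum, dotProduct_smul, smul_eq_mul,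
      Finset.mul_sum, ← Finset.sum_add_distrib, mul_add]
    refine Finset.sum_congr rfl fun i _ => ?_
    have h : ∑ j, b i * (Δt * (a i j * (g i ⬝ᵥ (Ω *ᵥ g j)))) =
        ∑ j, Δt * (b i * a i j * (g i ⬝ᵥ (Ω *ᵥ g j))) :=
      Finset.sum_congr rfl fun j _ => by ring
    rw [h]
    ring
  have hquad : (∑ i, b i • g i) ⬝ᵥ (Ω *ᵥ ∑ i, b i • g i) =
      ∑ i, ∑ j, b i * b j * (g i ⬝ᵥ (Ω *ᵥ g j)) := by
    simp only [mulVec_sum, mulVec_smul, dotProduct_sum, sum_dotProduct, smul_dotProduct,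
      dotProduct_smul, smul_eq_mul, Finset.mul_sum]
    rw [Finset.sum_comm]
    exact Finset.sum_congr rfl fun i _ => Finset.sum_congr rfl fun j _ => by ring
  -- The two stage terms of the double sum agree after exchanging `i` and `j`.
  have hswap : ∑ i, ∑ j, b j * a j i * (g i ⬝ᵥ (Ω *ᵥ g j)) =
      ∑ i, ∑ j, b i * a i j * (g i ⬝ᵥ (Ω *ᵥ g j)) := by
    rw [Finset.sum_comm]
    exact Finset.sum_congr rfl fun i _ => Finset.sum_congr rfl fun j _ => by
      rw [hsymm (g j)]
  have hdouble : ∑ i, ∑ j, (b i * b j - b i * a i j / γ - b j * a j i / γ) *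
        (g i ⬝ᵥ (Ω *ᵥ g j)) =
      (∑ i, b i • g i) ⬝ᵥ (Ω *ᵥ ∑ i, b i • g i)
        - 2 / γ * ∑ i, ∑ j, b i * a i j * (g i ⬝ᵥ (Ω *ᵥ g j)) := by
    have h : ∀ S : ℝ, 2 / γ * S = 1 / γ * S + 1 / γ * S := fun S => by ring
    rw [hquad, h]
    nth_rewrite 2 [← hswap]
    simp only [Finset.mul_sum, ← Finset.sum_add_distrib, ← Finset.sum_sub_distrib]
    exact Finset.sum_congr rfl fun i _ => Finset.sum_congr rfl fun j _ => by ring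
  rw [hlin, hdouble, hsol]
  generalize ∑ i, ∑ j, b i * a i j * (g i ⬝ᵥ (Ω *ᵥ g j)) = S
  generalize ∑ i, b i • g i = F
  simp only [quadDensity, smul_add, mulVec_add, mulVec_smul, dotProduct_add, add_dotProduct,
    smul_dotProduct, dotProduct_smul, smul_eq_mul, hsymm F u0]
  field_simp
  ring
end

section
/- Let ω ≠ 0 and Δt ≠ 0 be real numbers, set ν := ω Δt, and assume cos(ν/2) ≠ 0. Define γ1 := 1/cos(ν/2), a11 := tan(ν/2)/ν, b1 := sin(ν)/(ν cos(ν/2)). Then for every t ∈ ℝ and for both y(t) = cos(ωt) and y(t) = sin(ωt): (i) y(t + Δt) − y(t) − Δt b1 y′(t + Δt/2) = 0, and (ii) y(t + Δt/2) − γ1 y(t) − Δt a11 y′(t + Δt/2) = 0. That is, the exponentially fitted midpoint method with these coefficients is exact on the fitting space spanned by cos(ωt) and sin(ωt). -/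
/-!
Write `h = ν / 2` and let `θ = ω * (t + Δt / 2)` be the phase at the midpoint. The coefficients
satisfy `Δt * b1 * ω = 2 * sin h` and `Δt * a11 * ω = sin h / cos h`, while `t` and `t + Δt` have
phases `θ - h` and `θ + h`. Both identities then follow from the addition formulas for `cos (θ ± h)`
and `sin (θ ± h)`.
-/

open Real

/-- The exponentially fitted midpoint method (one-stage EFRK with `c₁ = 1/2` and
coefficients `γ₁ = 1/cos(ν/2)`, `a₁₁ = tan(ν/2)/ν`, `b₁ = sin ν/(ν cos(ν/2))`,
`ν = ωΔt`) is exact on the fitting space spanned by `cos(ωt)` and `sin(ωt)`. -/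
theorem ef_midpoint_exact_on_fitting_space (ω Δt : ℝ) (hω : ω ≠ 0) (hΔt : Δt ≠ 0)
    (ν : ℝ) (hν : ν = ω * Δt) (hcos : Real.cos (ν / 2) ≠ 0)
    (γ1 a11 b1 : ℝ)
    (hγ1 : γ1 = 1 / Real.cos (ν / 2))
    (ha11 : a11 = Real.tan (ν / 2) / ν)
    (hb1 : b1 = Real.sin ν / (ν * Real.cos (ν / 2))) :
    ∀ y : ℝ → ℝ,
      (y = fun t => Real.cos (ω * t)) ∨ (y = fun t => Real.sin (ω * t)) →
      ∀ t : ℝ,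
        y (t + Δt) - y t - Δt * b1 * deriv y (t + Δt / 2) = 0 ∧
        y (t + Δt / 2) - γ1 * y t - Δt * a11 * deriv y (t + Δt / 2) = 0 := by
  have hν0 : ν ≠ 0 := hν ▸ mul_ne_zero hω hΔt
  obtain ⟨h, hh⟩ : ∃ h, h = ν / 2 := ⟨_, rfl⟩
  have hν2 : ν = 2 * h := by linarith
  rw [← hh] at hcos hγ1 ha11 hb1
  have hb : Δt * b1 * ω = 2 * sin h := by
    have hs : sin ν = 2 * sin h * cos h := by rw [hν2, sin_two_mul]
    rw [hb1, hs]
    field_simp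
    rw [hν]
    ring
  have ha : Δt * a11 * ω = sin h / cos h := by
    rw [ha11, tan_eq_sin_div_cos]
    field_simp
    rw [hν]
    ring
  intro y hy t
  obtain ⟨θ, hθ⟩ : ∃ θ, θ = ω * (t + Δt / 2) := ⟨_, rfl⟩
  have e0 : ω * t = θ - h := by rw [hθ, hh, hν]; ring
  have e1 : ω * (t + Δt) = θ + h := by rw [hθ, hh, hν]; ring
  have hlin : HasDerivAt (fun s : ℝ => ω * s) ω (t + Δt / 2) := by
    simpa using (hasDerivAt_id (t + Δt / 2)).const_mul ω
  rcases hy with rfl | rfl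
  · have hd := hlin.cos.deriv
    rw [← hθ] at hd
    simp only [hd, e0, e1, ← hθ, cos_add, cos_sub, hγ1]
    constructor
    · linear_combination sin θ * hb
    · have hc : 1 / cos h * cos h = 1 := by field_simp
      linear_combination sin θ * ha - cos θ * hc
  · have hd := hlin.sin.deriv
    rw [← hθ] at hd
    simp only [hd, e0, e1, ← hθ, sin_add, sin_sub, hγ1]
    constructor
    · linear_combination -cos θ * hb
    · have hc : 1 / cos h * cos h = 1 := by field_simp
      linear_combination -cos θ * ha - sin θ * hc
end

section
/- For a real number c1, the identity 2 sin(c1 ν) cos(c1 ν) = sin(ν) holds for all ν ∈ ℝ if and only if c1 = 1/2. Consequently, among the one-parameter family of one-stage exponentially fitted Runge–Kutta methods with coefficients γ1 = 1/cos(c1ν), a11 = tan(c1ν)/ν, b1 = sin(ν)/(ν cos(c1ν)), the symplecticity condition b1 = 2 a11/γ1 (for all frequencies ν) selects uniquely the abscissa c1 = 1/2, i.e., the exponentially fitted midpoint method. -/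
open Real

/-!
Both identities say that `ν ↦ 2 sin(c₁ν) cos(c₁ν)` and `sin` agree near `0`; the coefficient
condition only says this where `ν ≠ 0` and `cos(c₁ν) ≠ 0`, but `ν = 0` is trivial and
`cos(c₁ν) ≠ 0` near `0` by continuity. Comparing derivatives at `0` gives `2 c₁ = 1`.
The converse is the double-angle formula.
-/

open Filter Topology in
/-- The identity is only needed near `0`, since only the derivatives at `0` are compared. -/
lemma eq_half_of_eventually (c1 : ℝ)
    (h : ∀ᶠ ν : ℝ in 𝓝 0, 2 * Real.sin (c1 * ν) * Real.cos (c1 * ν) = Real.sin ν) :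
    c1 = 1 / 2 := by
  have hlin : HasDerivAt (fun ν : ℝ => 2 * (c1 * ν)) (2 * c1) 0 := by
    simpa using ((hasDerivAt_id (0 : ℝ)).const_mul c1).const_mul 2
  have hleft : HasDerivAt (fun ν : ℝ => Real.sin (2 * (c1 * ν))) (2 * c1) 0 := by
    simpa using hlin.sin
  have hsin : HasDerivAt Real.sin 1 0 := by
    simpa using Real.hasDerivAt_sin 0
  have heq : (fun ν : ℝ => Real.sin (2 * (c1 * ν))) =ᶠ[𝓝 0] Real.sin := by
    filter_upwards [h] with ν hν
    rw [Real.sin_two_mul, hν]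
  have := hleft.unique (hsin.congr_of_eventuallyEq heq)
  linarith

lemma double_angle_half (ν : ℝ) :
    2 * Real.sin (1 / 2 * ν) * Real.cos (1 / 2 * ν) = Real.sin ν := by
  rw [← Real.sin_two_mul]
  congr 1
  ring

/-- Wherever the coefficients are defined, `b₁ = 2 a₁₁/γ₁` is the trigonometric identity. -/
lemma symplectic_iff_trig (c1 ν : ℝ) (hν : ν ≠ 0) (hc : Real.cos (c1 * ν) ≠ 0) :
    Real.sin ν / (ν * Real.cos (c1 * ν)) =
        2 * (Real.tan (c1 * ν) / ν) / (1 / Real.cos (c1 * ν)) ↔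
      2 * Real.sin (c1 * ν) * Real.cos (c1 * ν) = Real.sin ν := by
  have hr : 2 * (Real.tan (c1 * ν) / ν) / (1 / Real.cos (c1 * ν)) =
      2 * Real.sin (c1 * ν) / ν := by
    rw [Real.tan_eq_sin_div_cos]
    field_simp
  rw [hr, div_eq_div_iff (mul_ne_zero hν hc) hν]
  constructor
  · intro h
    apply mul_right_cancel₀ hν
    linear_combination -h
  · intro h
    linear_combination -ν * h

/-- Among one-stage EFRK methods with coefficients `γ₁ = 1/cos(c₁ν)`,
`a₁₁ = tan(c₁ν)/ν`, `b₁ = sin ν/(ν cos(c₁ν))`, the symplecticity condition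
`b₁ = 2 a₁₁/γ₁` for all frequencies, equivalently the identity
`2 sin(c₁ν) cos(c₁ν) = sin ν` for all `ν`, holds iff `c₁ = 1/2`:
this selects uniquely the exponentially fitted midpoint method. -/
theorem ef_symplectic_iff_midpoint (c1 : ℝ) :
    ((∀ ν : ℝ, 2 * Real.sin (c1 * ν) * Real.cos (c1 * ν) = Real.sin ν) ↔ c1 = 1 / 2) ∧
    ((∀ ν : ℝ, ν ≠ 0 → Real.cos (c1 * ν) ≠ 0 →
        Real.sin ν / (ν * Real.cos (c1 * ν)) =
          2 * (Real.tan (c1 * ν) / ν) / (1 / Real.cos (c1 * ν))) ↔ c1 = 1 / 2) := by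
  refine ⟨⟨fun h => eq_half_of_eventually c1 (Filter.Eventually.of_forall h), ?_⟩,
    ⟨fun h => eq_half_of_eventually c1 ?_, ?_⟩⟩
  · rintro rfl
    exact double_angle_half
  · have hcont : Continuous fun ν : ℝ => Real.cos (c1 * ν) := by fun_prop
    filter_upwards [hcont.continuousAt.eventually_ne (x := 0) (y := 0) (by simp)] with ν hc
    rcases eq_or_ne ν 0 with rfl | hν
    · simp
    · exact (symplectic_iff_trig c1 ν hν hc).1 (h ν hν hc)
  · rintro rfl ν hν hc
    exact (symplectic_iff_trig _ ν hν hc).2 (double_angle_half ν)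
end

section
/- Let Δx ≠ 0 and ω ∈ ℝ, and let U : ℤ → ℝ → ℝ be a family of differentiable functions of t indexed by the node m. Then for every m ∈ ℤ and t ∈ ℝ the following exact identity holds: U_m(t) · ( U_m′(t) − ω (U_{m+1}(t) − U_{m−1}(t))/(2Δx) ) = ( F_{m+1}(t) − F_m(t) )/Δx + d/dt ( ½ U_m(t)² ), where F_m(t) := −(ω/2) U_m(t) U_{m−1}(t). In particular, any solution of the semidiscretization U_m′ = ω (U_{m+1} − U_{m−1})/(2Δx) of the linear advection equation u_t = ω u_x satisfies the semidiscrete momentum conservation law (F_{m+1} − F_m)/Δx + d/dt(½U_m²) = 0. -/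
/-- The semidiscretization `U_m' = ω(U_{m+1} − U_{m−1})/(2Δx)` of the linear
advection equation `u_t = ω u_x` satisfies, in characteristic form, the exact
semidiscrete momentum conservation law with flux `F_m = −(ω/2) U_m U_{m−1}`
and density `½ U_m²`. -/
theorem advection_semidiscrete_momentum_law (Δx ω : ℝ) (hΔx : Δx ≠ 0)
    (U : ℤ → ℝ → ℝ) (hU : ∀ m, Differentiable ℝ (U m)) :
    ∀ (m : ℤ) (t : ℝ),
      U m t * (deriv (U m) t - ω * (U (m + 1) t - U (m - 1) t) / (2 * Δx)) =
        ((-(ω / 2) * U (m + 1) t * U m t) - (-(ω / 2) * U m t * U (m - 1) t)) / Δx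
          + deriv (fun s => (1 / 2) * (U m s) ^ 2) t := by
  intro m t
  have h : HasDerivAt (fun s => (1 / 2) * (U m s) ^ 2) (U m t * deriv (U m) t) t := by
    have h2 := ((hU m t).hasDerivAt.fun_pow 2).const_mul (1 / 2 : ℝ)
    refine h2.congr_deriv ?_
    norm_num
    ring
  -- Up to the factor `-(ω / 2)`, the products `U (m ± 1) t * U m t` are the two fluxes.
  rw [h.deriv]
  field_simp
  ring
end

section
/- Let Δx ≠ 0 and let U : ℤ → ℝ → ℝ be a family of differentiable functions of t. Define Ã_m := U_m′ + D_{Δx}( 2 (μ_{Δx}U_{m−1}) μ_{Δx}(U_{m−1}²) + D_{Δx}² μ_{Δx} U_{m−2} ), and F̃_m := ½ U_{m−1} U_m (U_{m−1}² + U_m² + U_{m−1}U_m) + (μ_{Δx}U_{m−1}) (D_{Δx}² μ_{Δx} U_{m−2}) − ¼ (D_{Δx}U_{m−1}) D_{Δx}(U_{m−2} + U_m). Then for every m ∈ ℤ and t ∈ ℝ: U_m(t) · Ã_m(t) = ( F̃_{m+1}(t) − F̃_m(t) )/Δx + d/dt ( ½ U_m(t)² ). In particular, any solution of the semidiscretization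 Ã_m = 0 of the modified Korteweg–de Vries equation u_t + 6u²u_x + u_{xxx} = 0 satisfies the semidiscrete momentum conservation law D_{Δx}F̃_m + d/dt(½U_m²) = 0. -/
/-- Forward difference operator on grid functions: `(D_{Δx} h)_m = (h_{m+1} − h_m)/Δx`. -/
noncomputable def Dx (Δx : ℝ) (h : ℤ → ℝ) (m : ℤ) : ℝ := (h (m + 1) - h m) / Δx

/-- Forward average operator on grid functions: `(μ_{Δx} h)_m = (h_{m+1} + h_m)/2`. -/
noncomputable def mux (h : ℤ → ℝ) (m : ℤ) : ℝ := (h (m + 1) + h m) / 2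

/-- Semidiscrete momentum flux for the conservative mKdV semidiscretization. -/
noncomputable def mkdvFlux (Δx : ℝ) (W : ℤ → ℝ) (m : ℤ) : ℝ :=
  (1 / 2) * W (m - 1) * W m * ((W (m - 1)) ^ 2 + (W m) ^ 2 + W (m - 1) * W m)
    + mux W (m - 1) * Dx Δx (Dx Δx (mux W)) (m - 2)
    - (1 / 4) * Dx Δx W (m - 1) * Dx Δx (fun k => W (k - 2) + W k) m

/-- The conservative semidiscretization
`Ã_m = U_m' + D_{Δx}(2(μ_{Δx}U_{m−1})μ_{Δx}(U_{m−1}²) + D_{Δx}²μ_{Δx}U_{m−2})`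
of the mKdV equation `u_t + 6u²u_x + u_{xxx} = 0` satisfies, in characteristic form,
the exact semidiscrete momentum conservation law `U_m Ã_m = D_{Δx}F̃_m + d/dt(½U_m²)`. -/
theorem mkdv_semidiscrete_momentum_law (Δx : ℝ) (hΔx : Δx ≠ 0)
    (U : ℤ → ℝ → ℝ) (hU : ∀ m, Differentiable ℝ (U m)) :
    ∀ (m : ℤ) (t : ℝ),
      U m t *
        (deriv (U m) t +
          Dx Δx (fun k =>
            2 * mux (fun j => U j t) (k - 1) * mux (fun j => (U j t) ^ 2) (k - 1)
              + Dx Δx (Dx Δx (mux (fun j => U j t))) (k - 2)) m) =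
      (mkdvFlux Δx (fun j => U j t) (m + 1) - mkdvFlux Δx (fun j => U j t) m) / Δx
        + deriv (fun s => (1 / 2) * (U m s) ^ 2) t := by
  intro m t
  have hd : deriv (fun s => (1 / 2) * (U m s) ^ 2) t = U m t * deriv (U m) t := by
    refine (((hU m t).hasDerivAt.pow 2).const_mul (1 / 2 : ℝ)).deriv.trans ?_
    norm_num
    ring
  rw [hd]
  -- Normalize every grid index to one of the five stencil points `m - 2, …, m + 2`;
  -- what remains is a rational identity in the five values of `U` there.
  simp only [mkdvFlux, Dx, mux,
    show m + 1 - 1 = m by ring, show m - 1 + 1 = m by ring, show m + 1 - 2 = m - 1 by ring,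
    show m - 2 + 1 = m - 1 by ring, show m + 1 + 1 = m + 2 by ring,
    show m + 2 - 2 = m by ring]
  field_simp
  ring
end

section
/- Let Δx ≠ 0 and let U, V : ℤ → ℝ → ℝ be families of differentiable functions of t. Define Ã¹_m := U_m′ + D_{Δx}²V_{m−1} + ½ ( U_m(U_{m−1} + U_{m+1}) + V_m(V_{m−1} + V_{m+1}) ) V_m and Ã²_m := −V_m′ + D_{Δx}²U_{m−1} + ½ ( U_m(U_{m−1} + U_{m+1}) + V_m(V_{m−1} + V_{m+1}) ) U_m, and set F̃_m := 2 (μ_{Δx}U_{m−1}) D_{Δx}V_{m−1} − 2 (D_{Δx}U_{m−1}) μ_{Δx}V_{m−1}. Then for every m ∈ ℤ and t ∈ ℝ: 2 U_m Ã¹_m − 2 V_m Ã²_m = ( F̃_{m+1} − F̃_m )/Δx + d/dt ( U_m² + V_m² ). In particular, any solution of the semidiscretization Ã¹_m = Ã²_m = 0 of the nonlinear Schrödinger system satisfies the semidiscrete charge conservation law D_{Δx}F̃_m + d/dt(U_m² + V_m²) = 0. -/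
/-- Semidiscrete charge flux for the conservative NLS semidiscretization. -/
noncomputable def nlsChargeFlux (Δx : ℝ) (P Q : ℤ → ℝ) (m : ℤ) : ℝ :=
  2 * mux P (m - 1) * Dx Δx Q (m - 1) - 2 * Dx Δx P (m - 1) * mux Q (m - 1)

/-- The conservative semidiscretization of the NLS system satisfies, in characteristic
form, the exact semidiscrete charge conservation law
`2U_m Ã¹_m − 2V_m Ã²_m = D_{Δx}F̃_m + d/dt(U_m² + V_m²)`. -/
theorem nls_semidiscrete_charge_law (Δx : ℝ) (hΔx : Δx ≠ 0)
    (U V : ℤ → ℝ → ℝ)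
    (hU : ∀ m, Differentiable ℝ (U m)) (hV : ∀ m, Differentiable ℝ (V m)) :
    ∀ (m : ℤ) (t : ℝ),
      2 * U m t *
          (deriv (U m) t + Dx Δx (Dx Δx (fun j => V j t)) (m - 1)
            + (1 / 2) * (U m t * (U (m - 1) t + U (m + 1) t)
                + V m t * (V (m - 1) t + V (m + 1) t)) * V m t)
        - 2 * V m t *
          (-(deriv (V m) t) + Dx Δx (Dx Δx (fun j => U j t)) (m - 1)
            + (1 / 2) * (U m t * (U (m - 1) t + U (m + 1) t)
                + V m t * (V (m - 1) t + V (m + 1) t)) * U m t) =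
      (nlsChargeFlux Δx (fun j => U j t) (fun j => V j t) (m + 1)
          - nlsChargeFlux Δx (fun j => U j t) (fun j => V j t) m) / Δx
        + deriv (fun s => (U m s) ^ 2 + (V m s) ^ 2) t := by
  intro m t
  have hderiv : deriv (fun s => (U m s) ^ 2 + (V m s) ^ 2) t
      = 2 * U m t * deriv (U m) t + 2 * V m t * deriv (V m) t := by
    have h := ((hU m t).hasDerivAt.pow 2).add ((hV m t).hasDerivAt.pow 2)
    refine (h.congr_deriv ?_).deriv
    norm_num
  -- The cubic terms cancel, and both sides of the spatial part reduce to
  -- `2 (U_m (V_{m+1} + V_{m-1}) - V_m (U_{m+1} + U_{m-1})) / Δx²`, because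
  -- `F̃_m = 2 (U_{m-1} V_m - U_m V_{m-1}) / Δx`.
  rw [hderiv]
  simp only [nlsChargeFlux, Dx, mux, sub_add_cancel, add_sub_cancel_right]
  field_simp
  ring
end

section
/- Let Δx ≠ 0 and let U, V : ℤ → ℝ → ℝ be families of differentiable functions of t. Define Ã¹_m := U_m′ + D_{Δx}²V_{m−1} + ½ ( U_m(U_{m−1} + U_{m+1}) + V_m(V_{m−1} + V_{m+1}) ) V_m and Ã²_m := −V_m′ + D_{Δx}²U_{m−1} + ½ ( U_m(U_{m−1} + U_{m+1}) + V_m(V_{m−1} + V_{m+1}) ) U_m. Set F̃_m := (D_{Δx}U_{m−1})² + (D_{Δx}V_{m−1})² + (μ_{Δx}V_{m−1}) d/dt(μ_{Δx}U_{m−1}) − (μ_{Δx}U_{m−1}) d/dt(μ_{Δx}V_{m−1}) + ½ (U_m U_{m−1} + V_m V_{m−1})² − (Δx²/4) [ (d/dt D_{Δx}U_{m−1}) D_{Δx}V_{m−1} − (d/dt D_{Δx}V_{m−1}) D_{Δx}U_{m−1} ], and G̃_m := U_m D_{Δx}μ_{Δx}V_{m−1} − V_m D_{Δx}μ_{Δx}U_{m−1}.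 Then for every m ∈ ℤ and t ∈ ℝ: 2 (D_{Δx}μ_{Δx}V_{m−1}) Ã¹_m + 2 (D_{Δx}μ_{Δx}U_{m−1}) Ã²_m = ( F̃_{m+1} − F̃_m )/Δx + d/dt G̃_m. In particular, any solution of the semidiscretization Ã¹_m = Ã²_m = 0 satisfies the semidiscrete momentum conservation law D_{Δx}F̃_m + d/dt G̃_m = 0. -/
/-- Semidiscrete momentum flux for the conservative NLS semidiscretization. -/
noncomputable def nlsMomFlux (Δx : ℝ) (U V : ℤ → ℝ → ℝ) (m : ℤ) (t : ℝ) : ℝ :=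
  (Dx Δx (fun j => U j t) (m - 1)) ^ 2 + (Dx Δx (fun j => V j t) (m - 1)) ^ 2
    + mux (fun j => V j t) (m - 1) * deriv (fun s => mux (fun j => U j s) (m - 1)) t
    - mux (fun j => U j t) (m - 1) * deriv (fun s => mux (fun j => V j s) (m - 1)) t
    + (1 / 2) * (U m t * U (m - 1) t + V m t * V (m - 1) t) ^ 2
    - (Δx ^ 2 / 4) *
        (deriv (fun s => Dx Δx (fun j => U j s) (m - 1)) t * Dx Δx (fun j => V j t) (m - 1)
          - deriv (fun s => Dx Δx (fun j => V j s) (m - 1)) t * Dx Δx (fun j => U j t) (m - 1))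

/-- Semidiscrete momentum density for the conservative NLS semidiscretization. -/
noncomputable def nlsMomDensity (Δx : ℝ) (U V : ℤ → ℝ → ℝ) (m : ℤ) (t : ℝ) : ℝ :=
  U m t * Dx Δx (mux (fun j => V j t)) (m - 1)
    - V m t * Dx Δx (mux (fun j => U j t)) (m - 1)

theorem hasDerivAt_Dx (Δx : ℝ) (W : ℤ → ℝ → ℝ) (W' : ℤ → ℝ) (t : ℝ)
    (hW : ∀ m, HasDerivAt (W m) (W' m) t) (m : ℤ) :
    HasDerivAt (fun s => Dx Δx (fun j => W j s) m) (Dx Δx W' m) t :=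
  ((hW (m + 1)).sub (hW m)).div_const Δx

theorem hasDerivAt_mux (W : ℤ → ℝ → ℝ) (W' : ℤ → ℝ) (t : ℝ)
    (hW : ∀ m, HasDerivAt (W m) (W' m) t) (m : ℤ) :
    HasDerivAt (fun s => mux (fun j => W j s) m) (mux W' m) t :=
  ((hW (m + 1)).add (hW m)).div_const 2

/-- The conservative semidiscretization of the NLS system satisfies, in characteristic
form, the exact semidiscrete momentum conservation law
`2(D_{Δx}μ_{Δx}V_{m−1})Ã¹_m + 2(D_{Δx}μ_{Δx}U_{m−1})Ã²_m = D_{Δx}F̃_m + d/dt G̃_m`. -/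
theorem nls_semidiscrete_momentum_law (Δx : ℝ) (hΔx : Δx ≠ 0)
    (U V : ℤ → ℝ → ℝ)
    (hU : ∀ m, Differentiable ℝ (U m)) (hV : ∀ m, Differentiable ℝ (V m)) :
    ∀ (m : ℤ) (t : ℝ),
      2 * Dx Δx (mux (fun j => V j t)) (m - 1) *
          (deriv (U m) t + Dx Δx (Dx Δx (fun j => V j t)) (m - 1)
            + (1 / 2) * (U m t * (U (m - 1) t + U (m + 1) t)
                + V m t * (V (m - 1) t + V (m + 1) t)) * V m t)
        + 2 * Dx Δx (mux (fun j => U j t)) (m - 1) *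
          (-(deriv (V m) t) + Dx Δx (Dx Δx (fun j => U j t)) (m - 1)
            + (1 / 2) * (U m t * (U (m - 1) t + U (m + 1) t)
                + V m t * (V (m - 1) t + V (m + 1) t)) * U m t) =
      (nlsMomFlux Δx U V (m + 1) t - nlsMomFlux Δx U V m t) / Δx
        + deriv (nlsMomDensity Δx U V m) t := by
  intro m t
  have hu : ∀ j, HasDerivAt (U j) (deriv (U j) t) t := fun j => (hU j t).hasDerivAt
  have hv : ∀ j, HasDerivAt (V j) (deriv (V j) t) t := fun j => (hV j t).hasDerivAt
  have hG : deriv (nlsMomDensity Δx U V m) t = _ :=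
    (((hu m).mul (hasDerivAt_Dx Δx (fun j s => mux (fun i => V i s) j) _ t
        (hasDerivAt_mux V _ t hv) (m - 1))).sub
      ((hv m).mul (hasDerivAt_Dx Δx (fun j s => mux (fun i => U i s) j) _ t
        (hasDerivAt_mux U _ t hu) (m - 1)))).deriv
  rw [hG]
  simp only [nlsMomFlux, (hasDerivAt_mux U _ t hu _).deriv, (hasDerivAt_mux V _ t hv _).deriv,
    (hasDerivAt_Dx Δx U _ t hu _).deriv, (hasDerivAt_Dx Δx V _ t hv _).deriv]
  simp only [Dx, mux, sub_add_cancel, add_sub_cancel_right]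
  field_simp
  ring
end

section
/- Let Δx ≠ 0, Δt ≠ 0, ω ≠ 0 be real numbers, set ν := ωΔt, assume cos(ν/2) ≠ 0, and let κ := ω sin(ν)/(ν cos²(ν/2)). Let u : ℤ × ℕ → ℝ satisfy, for all m ∈ ℤ and n ∈ ℕ, the exponentially fitted midpoint discretization of the advection equation: (u_{m,n+1} − u_{m,n})/Δt = κ (μ_{Δt}u_{m+1,n} − μ_{Δt}u_{m−1,n})/(2Δx), where μ_{Δt}u_{m,n} := (u_{m,n+1} + u_{m,n})/2. Then for all m ∈ ℤ and n ∈ ℕ the fully discrete momentum conservation law holds: ( ½ u_{m,n+1}² − ½ u_{m,n}² )/Δt − (κ/(2Δx)) ( (μ_{Δt}u_{m,n})(μ_{Δt}u_{m+1,n}) − (μ_{Δt}u_{m−1,n})(μ_{Δt}u_{m,n}) ) = 0. -/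
/-- The EF midpoint discretization of the linear advection equation preserves the
fully discrete momentum conservation law (equation (CLLAE2) of the paper). -/
theorem advection_ef_midpoint_discrete_momentum_law (Δx Δt ω : ℝ)
    (hΔx : Δx ≠ 0) (hΔt : Δt ≠ 0) (hω : ω ≠ 0)
    (ν : ℝ) (hν : ν = ω * Δt) (hcos : Real.cos (ν / 2) ≠ 0)
    (κ : ℝ) (hκ : κ = ω * Real.sin ν / (ν * (Real.cos (ν / 2)) ^ 2))
    (u : ℤ → ℕ → ℝ)
    (hscheme : ∀ (m : ℤ) (n : ℕ),
      (u m (n + 1) - u m n) / Δt =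
        κ * ((u (m + 1) (n + 1) + u (m + 1) n) / 2
              - (u (m - 1) (n + 1) + u (m - 1) n) / 2) / (2 * Δx)) :
    ∀ (m : ℤ) (n : ℕ),
      ((1 / 2) * (u m (n + 1)) ^ 2 - (1 / 2) * (u m n) ^ 2) / Δt
        - (κ / (2 * Δx)) *
            (((u m (n + 1) + u m n) / 2) * ((u (m + 1) (n + 1) + u (m + 1) n) / 2)
              - ((u (m - 1) (n + 1) + u (m - 1) n) / 2) * ((u m (n + 1) + u m n) / 2)) = 0 := by
  intro m n
  -- Multiply the scheme by the time average of `u m`: on the left this gives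
  -- `(a - b) * (a + b) / 2 = a ^ 2 / 2 - b ^ 2 / 2`, on the right the discrete flux difference.
  linear_combination ((u m (n + 1) + u m n) / 2) * hscheme m n
end

section
/- Let Δx ≠ 0, Δt ≠ 0, ω ≠ 0 be real numbers, set ν := ωΔt, assume cos(ν/2) ≠ 0. Let u : ℤ × ℕ → ℝ and for each m, n define W_{m,n} := (u_{m,n+1} + u_{m,n})/(2 cos(ν/2)). Suppose u satisfies, for all m ∈ ℤ and n ∈ ℕ, the exponentially fitted midpoint discretization of the mKdV equation: (u_{m,n+1} − u_{m,n})/Δt + (sin(ν)/(ν cos(ν/2))) D_{Δx}( 2 (μ_{Δx}W_{m−1,n}) μ_{Δx}(W_{m−1,n}²) + D_{Δx}² μ_{Δx} W_{m−2,n} ) = 0. Define F̃(W)_m := ½ W_{m−1}W_m(W_{m−1}² + W_m² + W_{m−1}W_m) + (μ_{Δx}W_{m−1}) D_{Δx}²μ_{Δx}W_{m−2} − ¼ (D_{Δx}W_{m−1}) D_{Δx}(W_{m−2} + W_m). Then for all m ∈ ℤ and n ∈ ℕ the fully discrete momentum conservation law holds: ( ½ u_{m,n+1}² − ½ u_{m,n}²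 )/Δt + (sin(ν)/ν) ( F̃(W_{·,n})_{m+1} − F̃(W_{·,n})_m )/Δx = 0. -/
/-- The stage value is a characteristic of the momentum law: multiplying the spatial part of the
scheme by it gives an exact difference, for an arbitrary grid function. -/
lemma mul_Dx_eq_Dx_mkdvFlux (Δx : ℝ) (W : ℤ → ℝ) (m : ℤ) :
    W m * Dx Δx (fun k => 2 * mux W (k - 1) * mux (fun j => (W j) ^ 2) (k - 1)
        + Dx Δx (Dx Δx (mux W)) (k - 2)) m
      = (mkdvFlux Δx W (m + 1) - mkdvFlux Δx W m) / Δx := by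
  -- Normalize every shifted index to one of the five stencil points.
  have e1 : m + 1 - 1 = m := by ring
  have e2 : m - 1 + 1 = m := by ring
  have e3 : m + 1 - 2 = m - 1 := by ring
  have e4 : m - 2 + 1 = m - 1 := by ring
  have e5 : m + 1 + 1 = m + 2 := by ring
  have e6 : m + 2 - 2 = m := by ring
  simp only [mkdvFlux, Dx, mux, e1, e2, e3, e4, e5, e6]
  ring

/-- The EF midpoint discretization of the mKdV equation preserves the fully discrete
momentum conservation law (equation (eq:mKdVcl2) of the paper). -/
theorem mkdv_ef_midpoint_discrete_momentum_law (Δx Δt ω : ℝ)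
    (hΔx : Δx ≠ 0) (hΔt : Δt ≠ 0) (hω : ω ≠ 0)
    (ν : ℝ) (hν : ν = ω * Δt) (hcos : Real.cos (ν / 2) ≠ 0)
    (u : ℤ → ℕ → ℝ) (W : ℕ → ℤ → ℝ)
    (hW : ∀ (n : ℕ) (m : ℤ), W n m = (u m (n + 1) + u m n) / (2 * Real.cos (ν / 2)))
    (hscheme : ∀ (m : ℤ) (n : ℕ),
      (u m (n + 1) - u m n) / Δt
        + (Real.sin ν / (ν * Real.cos (ν / 2))) *
            Dx Δx (fun k =>
              2 * mux (W n) (k - 1) * mux (fun j => (W n j) ^ 2) (k - 1)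
                + Dx Δx (Dx Δx (mux (W n))) (k - 2)) m = 0) :
    ∀ (m : ℤ) (n : ℕ),
      ((1 / 2) * (u m (n + 1)) ^ 2 - (1 / 2) * (u m n) ^ 2) / Δt
        + (Real.sin ν / ν) * (mkdvFlux Δx (W n) (m + 1) - mkdvFlux Δx (W n) m) / Δx = 0 := by
  intro m n
  have hs := hscheme m n
  rw [mul_comm ν, ← div_div] at hs
  have hsum : u m (n + 1) + u m n = 2 * Real.cos (ν / 2) * W n m := by
    rw [hW]
    field_simp
  rw [mul_div_assoc, ← mul_Dx_eq_Dx_mkdvFlux]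
  generalize Dx Δx (fun k => 2 * mux (W n) (k - 1) * mux (fun j => (W n j) ^ 2) (k - 1)
    + Dx Δx (Dx Δx (mux (W n))) (k - 2)) m = G at hs ⊢
  have hcancel : Real.cos (ν / 2) * (Real.sin ν / Real.cos (ν / 2)) = Real.sin ν := by
    field_simp
  linear_combination (Real.cos (ν / 2) * W n m) * hs
    + (u m (n + 1) - u m n) / (2 * Δt) * hsum - W n m * G / ν * hcancel
end

section
/- Let Δx ≠ 0, Δt ≠ 0, ω ≠ 0 be real numbers, set ν := ωΔt, assume cos(ν/2) ≠ 0. Let u, v : ℤ × ℕ → ℝ and define the stage values P_{m,n} := (u_{m,n+1} + u_{m,n})/(2cos(ν/2)) and Q_{m,n} := (v_{m,n+1} + v_{m,n})/(2cos(ν/2)). Suppose that for all m ∈ ℤ and n ∈ ℕ: (u_{m,n+1} − u_{m,n})/Δt + (sin(ν)/(ν cos(ν/2))) [ D_{Δx}²Q_{m−1,n} + ½ ( P_{m,n}(P_{m−1,n} + P_{m+1,n}) + Q_{m,n}(Q_{m−1,n} + Q_{m+1,n}) ) Q_{m,n} ] = 0 and −(v_{m,n+1} − v_{m,n})/Δt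 + (sin(ν)/(ν cos(ν/2))) [ D_{Δx}²P_{m−1,n} + ½ ( P_{m,n}(P_{m−1,n} + P_{m+1,n}) + Q_{m,n}(Q_{m−1,n} + Q_{m+1,n}) ) P_{m,n} ] = 0. Then for all m ∈ ℤ and n ∈ ℕ the fully discrete charge conservation law holds: ( (u_{m,n+1}² + v_{m,n+1}²) − (u_{m,n}² + v_{m,n}²) )/Δt + (sin(ν)/ν) ( F̃_{m+1,n} − F̃_{m,n} )/Δx = 0, where F̃_{m,n} := 2 (μ_{Δx}P_{m−1,n}) D_{Δx}Q_{m−1,n} − 2 (D_{Δx}P_{m−1,n}) μ_{Δx}Q_{m−1,n}. -/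
/-- Discrete counterpart of `(2 P Q_x - 2 P_x Q)_x = 2 (P Q_xx - Q P_xx)`. -/
lemma nlsChargeFlux_diff (Δx : ℝ) (P Q : ℤ → ℝ) (m : ℤ) :
    (nlsChargeFlux Δx P Q (m + 1) - nlsChargeFlux Δx P Q m) / Δx
      = 2 * (P m * Dx Δx (Dx Δx Q) (m - 1) - Q m * Dx Δx (Dx Δx P) (m - 1)) := by
  simp only [nlsChargeFlux, mux, Dx, sub_add_cancel, add_sub_cancel_right]
  ring

/-- The EF midpoint discretization of the NLS system preserves the fully discrete
charge conservation law (equation (eq:NLScl1) of the paper). -/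
theorem nls_ef_midpoint_discrete_charge_law (Δx Δt ω : ℝ)
    (hΔx : Δx ≠ 0) (hΔt : Δt ≠ 0) (hω : ω ≠ 0)
    (ν : ℝ) (hν : ν = ω * Δt) (hcos : Real.cos (ν / 2) ≠ 0)
    (u v : ℤ → ℕ → ℝ) (P Q : ℕ → ℤ → ℝ)
    (hP : ∀ (n : ℕ) (m : ℤ), P n m = (u m (n + 1) + u m n) / (2 * Real.cos (ν / 2)))
    (hQ : ∀ (n : ℕ) (m : ℤ), Q n m = (v m (n + 1) + v m n) / (2 * Real.cos (ν / 2)))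
    (hscheme1 : ∀ (m : ℤ) (n : ℕ),
      (u m (n + 1) - u m n) / Δt
        + (Real.sin ν / (ν * Real.cos (ν / 2))) *
            (Dx Δx (Dx Δx (Q n)) (m - 1)
              + (1 / 2) * (P n m * (P n (m - 1) + P n (m + 1))
                  + Q n m * (Q n (m - 1) + Q n (m + 1))) * Q n m) = 0)
    (hscheme2 : ∀ (m : ℤ) (n : ℕ),
      -((v m (n + 1) - v m n) / Δt)
        + (Real.sin ν / (ν * Real.cos (ν / 2))) *
            (Dx Δx (Dx Δx (P n)) (m - 1)
              + (1 / 2) * (P n m * (P n (m - 1) + P n (m + 1))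
                  + Q n m * (Q n (m - 1) + Q n (m + 1))) * P n m) = 0) :
    ∀ (m : ℤ) (n : ℕ),
      (((u m (n + 1)) ^ 2 + (v m (n + 1)) ^ 2) - ((u m n) ^ 2 + (v m n) ^ 2)) / Δt
        + (Real.sin ν / ν) *
            (nlsChargeFlux Δx (P n) (Q n) (m + 1) - nlsChargeFlux Δx (P n) (Q n) m) / Δx
          = 0 := by
  intro m n
  have h1 := hscheme1 m n
  have h2 := hscheme2 m n
  have hu : u m (n + 1) + u m n = 2 * Real.cos (ν / 2) * P n m := by
    rw [hP]; field_simp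
  have hv : v m (n + 1) + v m n = 2 * Real.cos (ν / 2) * Q n m := by
    rw [hQ]; field_simp
  have hs : Real.sin ν / ν
      = Real.cos (ν / 2) * (Real.sin ν / (ν * Real.cos (ν / 2))) := by
    field_simp
  have hcharge : (((u m (n + 1)) ^ 2 + (v m (n + 1)) ^ 2) - ((u m n) ^ 2 + (v m n) ^ 2)) / Δt
      = (u m (n + 1) + u m n) * ((u m (n + 1) - u m n) / Δt)
        + (v m (n + 1) + v m n) * ((v m (n + 1) - v m n) / Δt) := by
    ring
  rw [mul_div_assoc, nlsChargeFlux_diff, hcharge, hu, hv, hs]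
  linear_combination 2 * Real.cos (ν / 2) * P n m * h1 - 2 * Real.cos (ν / 2) * Q n m * h2
end

section
/- Let ξ ≠ 0, η > 0, and ρ1, ρ2 ∈ ℝ. Define ν1(x,t) := 2ξ(x + 4(ξ² − 3η²)t) and ν2(x,t) := 2η(x − 4(η² − 3ξ²)t), and let u(x,t) := −4(η/ξ) · [ ξ cosh(ν2 + ρ2) sin(ν1 + ρ1) + η sinh(ν2 + ρ2) cos(ν1 + ρ1) ] / [ cosh²(ν2 + ρ2) + (η/ξ)² cos²(ν1 + ρ1) ]. Then u is smooth on ℝ² and satisfies the modified Korteweg–de Vries equation u_t + 6u²u_x + u_{xxx} = 0 at every point (x,t) ∈ ℝ². -/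
/-!
With `f = ξ cosh (ν2 + ρ2)` and `g = η cos (ν1 + ρ1)` the breather is `u = 2 ∂ₓ arctan (g / f)`, that
is `u = 2 (gₓ f - g fₓ) / (f² + g²)`. The pair `(f, g)` satisfies Hirota's bilinear form of mKdV,

* `(D_t + D_x³) g · f = 0`,
* `D_x² (f · f + g · g) = 0`.

For any such pair, `u` satisfies the potential form `u_xx + 2 u³ + v = 0` with
`v = 2 (g_t f - g f_t) / (f² + g²) = 2 ∂_t arctan (g / f)` (`potential_identity`). Since `v_x = u_t`
(`mixed_identity`), differentiating the potential form in `x` gives mKdV (`mkdv_of_bilinear`).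
-/

/-- The breather solution of the modified Korteweg–de Vries equation. -/
noncomputable def mkdvBreather (ξ η ρ1 ρ2 : ℝ) (x t : ℝ) : ℝ :=
  let ν1 : ℝ := 2 * ξ * (x + 4 * (ξ ^ 2 - 3 * η ^ 2) * t);
  let ν2 : ℝ := 2 * η * (x - 4 * (η ^ 2 - 3 * ξ ^ 2) * t);
  (-4) * (η / ξ) *
      ((ξ * Real.cosh (ν2 + ρ2) * Real.sin (ν1 + ρ1)
          + η * Real.sinh (ν2 + ρ2) * Real.cos (ν1 + ρ1))
        / ((Real.cosh (ν2 + ρ2)) ^ 2 + (η / ξ) ^ 2 * (Real.cos (ν1 + ρ1)) ^ 2))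

/-- `F1, F2, F3` are the first three `x`-derivatives of `F`, `Ft` its `t`-derivative, and `F1t` the
common value of its two mixed second derivatives. -/
structure IsJet (F F1 F2 F3 Ft F1t : ℝ → ℝ → ℝ) : Prop where
  x1 : ∀ x t, HasDerivAt (fun y => F y t) (F1 x t) x
  x2 : ∀ x t, HasDerivAt (fun y => F1 y t) (F2 x t) x
  x3 : ∀ x t, HasDerivAt (fun y => F2 y t) (F3 x t) x
  t1 : ∀ x t, HasDerivAt (fun τ => F x τ) (Ft x t) t
  xt : ∀ x t, HasDerivAt (fun τ => F1 x τ) (F1t x t) t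
  tx : ∀ x t, HasDerivAt (fun y => Ft y t) (F1t x t) x

/-- The potential form `u_xx = -2 u³ - v`, with the quotients differentiated by the quotient rule.
In terms of `z = f + i g` the coefficient of `h2` comes from `|z' z̄|² = |z'|² |z|²`. -/
lemma potential_identity (f f1 f2 f3 ft g g1 g2 g3 gt : ℝ) (hD : f ^ 2 + g ^ 2 ≠ 0)
    (h1 : (gt * f - g * ft) + (g3 * f - 3 * g2 * f1 + 3 * g1 * f2 - g * f3) = 0)
    (h2 : f * f2 - f1 ^ 2 + (g * g2 - g1 ^ 2) = 0) :
    ((2 * (g3 * f + g2 * f1 - g1 * f2 - g * f3) * (f ^ 2 + g ^ 2)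
          - 2 * (g1 * f - g * f1) * (2 * (f1 ^ 2 + f * f2 + g1 ^ 2 + g * g2)))
            * (f ^ 2 + g ^ 2) ^ 2
        - (2 * (g2 * f - g * f2) * (f ^ 2 + g ^ 2)
            - 2 * (g1 * f - g * f1) * (2 * (f * f1 + g * g1)))
          * (2 * (f ^ 2 + g ^ 2) * (2 * (f * f1 + g * g1)))) / ((f ^ 2 + g ^ 2) ^ 2) ^ 2
      = -2 * (2 * (g1 * f - g * f1) / (f ^ 2 + g ^ 2)) ^ 3
        - 2 * (gt * f - g * ft) / (f ^ 2 + g ^ 2) := by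
  field_simp
  linear_combination (f ^ 2 + g ^ 2) ^ 2 * h1
    - 6 * (f ^ 2 + g ^ 2) * (g1 * f - g * f1) * h2

/-- Equality of the mixed second derivatives of `2 arctan (g / f)`, cleared of denominators. -/
lemma mixed_identity (f f1 ft f1t g g1 gt g1t : ℝ) :
    2 * (g1t * f + g1 * ft - (gt * f1 + g * f1t)) * (f ^ 2 + g ^ 2)
        - 2 * (g1 * f - g * f1) * (2 * (f * ft + g * gt))
      = 2 * (g1t * f + gt * f1 - (g1 * ft + g * f1t)) * (f ^ 2 + g ^ 2)
        - 2 * (gt * f - g * ft) * (2 * (f * f1 + g * g1)) := by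
  ring

/-- Hirota's bilinear equations for `(f, g)` imply mKdV for `u = 2 (gₓ f - g fₓ) / (f² + g²)`. -/
theorem mkdv_of_bilinear {f f1 f2 f3 ft f1t g g1 g2 g3 gt g1t : ℝ → ℝ → ℝ}
    (hf : IsJet f f1 f2 f3 ft f1t) (hg : IsJet g g1 g2 g3 gt g1t)
    (hD : ∀ x t, f x t ^ 2 + g x t ^ 2 ≠ 0)
    (h1 : ∀ x t, (gt x t * f x t - g x t * ft x t)
      + (g3 x t * f x t - 3 * g2 x t * f1 x t + 3 * g1 x t * f2 x t - g x t * f3 x t) = 0)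
    (h2 : ∀ x t, f x t * f2 x t - f1 x t ^ 2 + (g x t * g2 x t - g1 x t ^ 2) = 0)
    {u : ℝ → ℝ → ℝ}
    (hu : ∀ x t, u x t = 2 * (g1 x t * f x t - g x t * f1 x t) / (f x t ^ 2 + g x t ^ 2))
    (x t : ℝ) :
    deriv (fun τ => u x τ) t + 6 * (u x t) ^ 2 * deriv (fun y => u y t) x
      + deriv (fun y => deriv (fun y' => deriv (fun y'' => u y'' t) y') y) x = 0 := by
  obtain rfl : u = fun x t => 2 * (g1 x t * f x t - g x t * f1 x t) / (f x t ^ 2 + g x t ^ 2) := by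
    funext x t; exact hu x t
  have hDx : ∀ y, HasDerivAt (fun y => f y t ^ 2 + g y t ^ 2)
      (2 * (f y t * f1 y t + g y t * g1 y t)) y := fun y => by
    exact HasDerivAt.congr_deriv
      (((hf.x1 y t).fun_pow 2).fun_add ((hg.x1 y t).fun_pow 2)) (by push_cast; ring)
  have hDt : HasDerivAt (fun τ => f x τ ^ 2 + g x τ ^ 2)
      (2 * (f x t * ft x t + g x t * gt x t)) t := by
    exact HasDerivAt.congr_deriv
      (((hf.t1 x t).fun_pow 2).fun_add ((hg.t1 x t).fun_pow 2)) (by push_cast; ring)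
  have hPx : ∀ y, HasDerivAt (fun y => 2 * (g1 y t * f y t - g y t * f1 y t))
      (2 * (g2 y t * f y t - g y t * f2 y t)) y := fun y => by
    exact HasDerivAt.congr_deriv
      ((((hg.x2 y t).fun_mul (hf.x1 y t)).fun_sub
      ((hg.x1 y t).fun_mul (hf.x2 y t))).const_mul 2) (by ring)
  have hPxx : ∀ y, HasDerivAt (fun y => 2 * (g2 y t * f y t - g y t * f2 y t))
      (2 * (g3 y t * f y t + g2 y t * f1 y t - g1 y t * f2 y t - g y t * f3 y t)) y := fun y => by
    exact HasDerivAt.congr_deriv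
      ((((hg.x3 y t).fun_mul (hf.x1 y t)).fun_sub
      ((hg.x1 y t).fun_mul (hf.x3 y t))).const_mul 2) (by ring)
  have hDxx : ∀ y, HasDerivAt (fun y => 2 * (f y t * f1 y t + g y t * g1 y t))
      (2 * (f1 y t ^ 2 + f y t * f2 y t + g1 y t ^ 2 + g y t * g2 y t)) y := fun y => by
    exact HasDerivAt.congr_deriv
      ((((hf.x1 y t).fun_mul (hf.x2 y t)).fun_add
      ((hg.x1 y t).fun_mul (hg.x2 y t))).const_mul 2) (by ring)
  have hDsq : ∀ y, HasDerivAt (fun y => (f y t ^ 2 + g y t ^ 2) ^ 2)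
      (2 * (f y t ^ 2 + g y t ^ 2) * (2 * (f y t * f1 y t + g y t * g1 y t))) y := fun y => by
    exact HasDerivAt.congr_deriv
      ((hDx y).fun_pow 2) (by push_cast; ring)
  have hux := fun y => (hPx y).fun_div (hDx y) (hD y t)
  have huxx := fun y => ((((hPxx y).fun_mul (hDx y)).fun_sub
    ((hPx y).fun_mul (hDxx y))).fun_div (hDsq y) (pow_ne_zero 2 (hD y t)))
  have hQx : HasDerivAt (fun y => 2 * (gt y t * f y t - g y t * ft y t))
      (2 * (g1t x t * f x t + gt x t * f1 x t - (g1 x t * ft x t + g x t * f1t x t))) x :=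
    (((hg.tx x t).fun_mul (hf.x1 x t)).fun_sub ((hg.x1 x t).fun_mul (hf.tx x t))).const_mul 2
  have hPt : HasDerivAt (fun τ => 2 * (g1 x τ * f x τ - g x τ * f1 x τ))
      (2 * (g1t x t * f x t + g1 x t * ft x t - (gt x t * f1 x t + g x t * f1t x t))) t :=
    (((hg.xt x t).fun_mul (hf.t1 x t)).fun_sub ((hg.t1 x t).fun_mul (hf.xt x t))).const_mul 2
  have hut := hPt.fun_div hDt (hD x t)
  rw [mixed_identity] at hut
  have hvx := hQx.fun_div (hDx x) (hD x t)
  -- The potential form holds for all `y`, so it can be differentiated once more.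
  have hpot : (fun y => deriv (fun y' => deriv (fun y'' =>
      2 * (g1 y'' t * f y'' t - g y'' t * f1 y'' t) / (f y'' t ^ 2 + g y'' t ^ 2)) y') y)
      = fun y => -2 * (2 * (g1 y t * f y t - g y t * f1 y t) / (f y t ^ 2 + g y t ^ 2)) ^ 3
        - 2 * (gt y t * f y t - g y t * ft y t) / (f y t ^ 2 + g y t ^ 2) := by
    have e : (fun y' => deriv (fun y'' =>
      2 * (g1 y'' t * f y'' t - g y'' t * f1 y'' t) / (f y'' t ^ 2 + g y'' t ^ 2)) y') = _ :=
      funext fun y => (hux y).deriv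
    rw [e]
    funext y
    rw [← potential_identity _ _ _ _ _ _ _ _ _ _ (hD y t) (h1 y t) (h2 y t)]
    refine Eq.trans (huxx y).deriv ?_
    congr 1
    ring
  have h3 := (((hux x).fun_pow 3).const_mul (-2)).fun_sub hvx
  rw [hpot, h3.deriv, hut.deriv, (hux x).deriv]
  push_cast
  ring

/-- The breather is a globally smooth solution of the mKdV equation
`u_t + 6u²u_x + u_{xxx} = 0`. -/
theorem mkdv_breather_solves_mkdv (ξ η ρ1 ρ2 : ℝ) (hξ : ξ ≠ 0) (hη : 0 < η) :
    ContDiff ℝ (⊤ : ℕ∞) (fun p : ℝ × ℝ => mkdvBreather ξ η ρ1 ρ2 p.1 p.2) ∧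
    ∀ x t : ℝ,
      deriv (fun τ => mkdvBreather ξ η ρ1 ρ2 x τ) t
        + 6 * (mkdvBreather ξ η ρ1 ρ2 x t) ^ 2 *
            deriv (fun y => mkdvBreather ξ η ρ1 ρ2 y t) x
        + deriv (fun y =>
            deriv (fun y' =>
              deriv (fun y'' => mkdvBreather ξ η ρ1 ρ2 y'' t) y') y) x = 0 := by
  constructor
  · unfold mkdvBreather
    refine contDiff_const.mul (ContDiff.div ?_ ?_ ?_)
    · have := Real.contDiff_cosh (n := (⊤ : ℕ∞))
      have := Real.contDiff_sinh (n := (⊤ : ℕ∞))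
      fun_prop
    · have := Real.contDiff_cosh (n := (⊤ : ℕ∞))
      fun_prop
    · intro p
      positivity
  · set a : ℝ → ℝ → ℝ := fun x t => 2 * ξ * (x + 4 * (ξ ^ 2 - 3 * η ^ 2) * t) + ρ1 with ha
    set b : ℝ → ℝ → ℝ := fun x t => 2 * η * (x - 4 * (η ^ 2 - 3 * ξ ^ 2) * t) + ρ2 with hb
    have hax : ∀ x t, HasDerivAt (fun y => a y t) (2 * ξ) x := fun x t => by
      simpa [ha, hb] using (((hasDerivAt_id x).add_const _).const_mul (2 * ξ)).add_const ρ1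
    have hbx : ∀ x t, HasDerivAt (fun y => b y t) (2 * η) x := fun x t => by
      simpa [ha, hb] using (((hasDerivAt_id x).sub_const _).const_mul (2 * η)).add_const ρ2
    have hat : ∀ x t, HasDerivAt (fun τ => a x τ) (2 * ξ * (4 * (ξ ^ 2 - 3 * η ^ 2))) t :=
      fun x t => by
      simpa [ha, hb] using ((((hasDerivAt_id t).const_mul (4 * (ξ ^ 2 - 3 * η ^ 2))).const_add
        x).const_mul (2 * ξ)).add_const ρ1
    have hbt : ∀ x t, HasDerivAt (fun τ => b x τ) (-(2 * η * (4 * (η ^ 2 - 3 * ξ ^ 2)))) t :=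
      fun x t => by
      simpa [ha, hb] using ((((hasDerivAt_id t).const_mul (4 * (η ^ 2 - 3 * ξ ^ 2))).const_sub
        x).const_mul (2 * η)).add_const ρ2
    have hf : IsJet (fun x t => ξ * Real.cosh (b x t))
        (fun x t => 2 * ξ * η * Real.sinh (b x t))
        (fun x t => 4 * ξ * η ^ 2 * Real.cosh (b x t))
        (fun x t => 8 * ξ * η ^ 3 * Real.sinh (b x t))
        (fun x t => -8 * ξ * η * (η ^ 2 - 3 * ξ ^ 2) * Real.sinh (b x t))
        (fun x t => -16 * ξ * η ^ 2 * (η ^ 2 - 3 * ξ ^ 2) * Real.cosh (b x t)) := by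
      constructor <;> intro x t
      · exact HasDerivAt.congr_deriv (((hbx x t).cosh).const_mul ξ) (by ring)
      · exact HasDerivAt.congr_deriv (((hbx x t).sinh).const_mul (2 * ξ * η)) (by ring)
      · exact HasDerivAt.congr_deriv (((hbx x t).cosh).const_mul (4 * ξ * η ^ 2)) (by ring)
      · exact HasDerivAt.congr_deriv (((hbt x t).cosh).const_mul ξ) (by ring)
      · exact HasDerivAt.congr_deriv (((hbt x t).sinh).const_mul (2 * ξ * η)) (by ring)
      · exact HasDerivAt.congr_deriv (((hbx x t).sinh).const_mul (-8 * ξ * η * (η ^ 2 - 3 * ξ ^ 2))) (by ring)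
    have hg : IsJet (fun x t => η * Real.cos (a x t))
        (fun x t => -2 * ξ * η * Real.sin (a x t))
        (fun x t => -4 * ξ ^ 2 * η * Real.cos (a x t))
        (fun x t => 8 * ξ ^ 3 * η * Real.sin (a x t))
        (fun x t => -8 * ξ * η * (ξ ^ 2 - 3 * η ^ 2) * Real.sin (a x t))
        (fun x t => -16 * ξ ^ 2 * η * (ξ ^ 2 - 3 * η ^ 2) * Real.cos (a x t)) := by
      constructor <;> intro x t
      · exact HasDerivAt.congr_deriv (((hax x t).cos).const_mul η) (by ring)
      · exact HasDerivAt.congr_deriv (((hax x t).sin).const_mul (-2 * ξ * η)) (by ring)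
      · exact HasDerivAt.congr_deriv (((hax x t).cos).const_mul (-4 * ξ ^ 2 * η)) (by ring)
      · exact HasDerivAt.congr_deriv (((hat x t).cos).const_mul η) (by ring)
      · exact HasDerivAt.congr_deriv (((hat x t).sin).const_mul (-2 * ξ * η)) (by ring)
      · exact HasDerivAt.congr_deriv (((hax x t).sin).const_mul (-8 * ξ * η * (ξ ^ 2 - 3 * η ^ 2))) (by ring)
    refine mkdv_of_bilinear hf hg ?_ ?_ ?_ ?_
    · intro x t
      positivity
    · intro x t
      ring
    · intro x t
      linear_combination (4 * ξ ^ 2 * η ^ 2) * Real.cosh_sq_sub_sinh_sq (b x t)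
        - (4 * ξ ^ 2 * η ^ 2) * Real.sin_sq_add_cos_sq (a x t)
    · intro x t
      have h1 : Real.cosh (b x t) ^ 2 + (η / ξ) ^ 2 * Real.cos (a x t) ^ 2 ≠ 0 := by positivity
      have h2 : (ξ * Real.cosh (b x t)) ^ 2 + (η * Real.cos (a x t)) ^ 2
          = ξ ^ 2 * (Real.cosh (b x t) ^ 2 + (η / ξ) ^ 2 * Real.cos (a x t) ^ 2) := by
        field_simp
      change (-4) * (η / ξ) * ((ξ * Real.cosh (b x t) * Real.sin (a x t)
          + η * Real.sinh (b x t) * Real.cos (a x t))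
        / ((Real.cosh (b x t)) ^ 2 + (η / ξ) ^ 2 * (Real.cos (a x t)) ^ 2)) = _
      rw [h2]
      generalize Real.cosh (b x t) ^ 2 + (η / ξ) ^ 2 * Real.cos (a x t) ^ 2 = d at h1
      field_simp
      ring
end
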